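/- Let θ ∈ (0,1). For i = 1, 2, let (Ȳ^i_t)_{t∈[0,T]} be mean-continuous families of Ê-integrable random variables with l_T ≤ Ê[ħ(T, Ȳ^i_T)] ≤ u_T, and let (Y^i, R^i) = BSP̂_l^u(Ȳ^i, ħ) (same data ħ, l, u for both). Write δ_θφ := (φ^1 − θφ^2)/(1−θ) and δ̃_θφ := (φ^2 − θφ^1)/(1−θ) for φ = Y, Ȳ. Then for every t ∈ [0,T] and every ω ∈ Ω: |δ_θY_t(ω)| ≤ C_0′(t,T,Ȳ^1,Ȳ^2) + |δ_θȲ_t(ω)| + 𝒞 · sup_{s∈[t,T]} Ê[|δ_θȲ_s|], and |δ̃_θY_t(ω)| ≤ C_0′(t,T,Ȳ^1,Ȳ^2) + |δ̃_θȲ_t(ω)| + 𝒞 · sup_{s∈[t,T]} Ê[|δ̃_θȲ_s|], where 𝒞 := 1 + 2c̄/c̲ and C_0′(t,T,Ȳ^1,Ȳ^2) := (2/c̲) sup_{s∈[t,T]} max(|l_s|,|u_s|) + (c̄/c̲) sup_{s∈[t,T]} max(|L_s(0)|,|U_s(0)|) + (2c̄(c̲+c̄)/c̲²) ( sup_{s∈[t,T]}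 Ê[|Ȳ^1_s|] + sup_{s∈[t,T]} Ê[|Ȳ^2_s|] ). -/

import Mathlib

open MeasureTheory Set Filter

/-- The sublinear expectation `Ê[X] = sup_{P ∈ Ps} ∫ X dP`. -/
noncomputable def sublinE {Ω : Type*} [MeasurableSpace Ω] (Ps : Set (Measure Ω)) (X : Ω → ℝ) : ℝ :=
  sSup ((fun P => ∫ ω, X ω ∂P) '' Ps)

/-- `X` is Ê-integrable: measurable, integrable w.r.t. each `P ∈ Ps`, and
`sup_{P ∈ Ps} ∫ |X| dP < ∞`. -/
def EIntegrable {Ω : Type*} [MeasurableSpace Ω] (Ps : Set (Measure Ω)) (X : Ω → ℝ) : Prop :=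
  Measurable X ∧ (∀ P ∈ Ps, Integrable X P) ∧ ∃ M : ℝ, ∀ P ∈ Ps, (∫ ω, |X ω| ∂P) ≤ M

/-- Assumption (H_r) on the barriers `l, u` and the running loss function `hb`,
with constants `0 < cl ≤ cu` and `Ch > 0`. -/
def HrAssumption {Ω : Type*} [MeasurableSpace Ω] (T cl cu Ch : ℝ)
    (l u : ℝ → ℝ) (hb : ℝ → Ω → ℝ → ℝ) : Prop :=
  0 < cl ∧ cl ≤ cu ∧ 0 < Ch ∧
  ContinuousOn l (Icc 0 T) ∧ ContinuousOn u (Icc 0 T) ∧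
  (∃ M : ℝ, ∀ t ∈ Icc (0:ℝ) T, |l t| ≤ M ∧ |u t| ≤ M) ∧
  (∃ ε > 0, ∀ t ∈ Icc (0:ℝ) T, ε ≤ u t - l t) ∧
  (∀ t y, Measurable fun ω => hb t ω y) ∧
  (∀ ε > 0, ∃ δ > 0, ∀ (ω : Ω) (t t' y y' : ℝ),
      |t - t'| + |y - y'| < δ → |hb t ω y - hb t' ω y'| < ε) ∧
  (∀ t ω, StrictMono (hb t ω)) ∧
  (∀ t ω y, |hb t ω y| ≤ Ch * (1 + |y|)) ∧
  (∀ t ω y y', cl * |y - y'| ≤ |hb t ω y - hb t ω y'| ∧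
    |hb t ω y - hb t ω y'| ≤ cu * |y - y'|)

/-- `H̄(t, x, X) = Ê[hb(t, x + X − Ê[X])]`. -/
noncomputable def Hbar {Ω : Type*} [MeasurableSpace Ω] (Ps : Set (Measure Ω))
    (hb : ℝ → Ω → ℝ → ℝ) (t x : ℝ) (X : Ω → ℝ) : ℝ :=
  sublinE Ps (fun ω => hb t ω (x + X ω - sublinE Ps X))

/-- A family `(S_t)_{t ∈ [0,T]}` of Ê-integrable random variables which is continuous in mean. -/
def MeanContinuous {Ω : Type*} [MeasurableSpace Ω] (Ps : Set (Measure Ω)) (T : ℝ)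
    (S : ℝ → Ω → ℝ) : Prop :=
  (∀ t ∈ Icc (0:ℝ) T, EIntegrable Ps (S t)) ∧
  ∀ t ∈ Icc (0:ℝ) T,
    Tendsto (fun s => sublinE Ps fun ω => |S s ω - S t ω|) (nhdsWithin t (Icc 0 T)) (nhds 0)

/-- The minimality (Skorokhod) condition in its equivalent increment form: `R` may only
increase on intervals where `φ` stays strictly below `u` and may only decrease on intervals
where `φ` stays strictly above `l`. -/
def MinimalityIncr (T : ℝ) (φ l u R : ℝ → ℝ) : Prop :=
  ∀ s t : ℝ, 0 ≤ s → s < t → t ≤ T →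
    ((∀ v, s < v → v ≤ t → φ v < u v) → R s ≤ R t) ∧
    ((∀ v, s < v → v ≤ t → l v < φ v) → R t ≤ R s)

/-- `(Y, R)` solves the backward Skorokhod problem with sublinear expectation for the data
`(Ybar, hb, l, u)`. -/
def IsBSPsol {Ω : Type*} [MeasurableSpace Ω] (Ps : Set (Measure Ω)) (T : ℝ)
    (hb : ℝ → Ω → ℝ → ℝ) (l u : ℝ → ℝ) (Ybar Y : ℝ → Ω → ℝ) (R : ℝ → ℝ) : Prop :=
  (∀ t ∈ Icc (0:ℝ) T, ∀ ω, Y t ω = Ybar t ω + R T - R t) ∧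
  (∀ t ∈ Icc (0:ℝ) T, l t ≤ sublinE Ps (fun ω => hb t ω (Y t ω)) ∧
    sublinE Ps (fun ω => hb t ω (Y t ω)) ≤ u t) ∧
  ContinuousOn R (Icc 0 T) ∧ BoundedVariationOn R (Icc 0 T) ∧ R 0 = 0 ∧
  MinimalityIncr T (fun v => sublinE Ps (fun ω => hb v ω (Y v ω))) l u R

/-!
A comparison principle: if `Ê[h(X + x)] ≤ Ê[h(W + w)]` for a loss `h` with slopes in `[c̲, c̄]`,
then `x - w ≤ (c̄ / c̲) Ê[|X - W|]`. Put `Aⁱ_s = Rⁱ_T - Rⁱ_s`, so that `Yⁱ = Ȳⁱ + Aⁱ`. Comparing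
`Y²` with the constants `L_s(0)` and `U_s(0)` bounds `A²_s`. Comparing `Y¹` with `Y²` bounds
`δ_θA_s` from above whenever `Ê[ħ(s, Y¹_s)] ≤ Ê[ħ(s, Y²_s)]`. At all other times `Y¹` is off the
lower barrier and `Y²` is off the upper one, so by minimality `R¹` cannot increase and `R²` cannot
decrease. Hence `δ_θA`, which vanishes at `T`, cannot come down to the bound from above, and stays
below it. The lower bound is the same argument for the reflected data `(-φ, -u, -l, -R)`.
-/

section SublinearExpectation

variable {Ω : Type*} [MeasurableSpace Ω] {Ps : Set (Measure Ω)} {X Y : Ω → ℝ}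

namespace EIntegrable

lemma of_abs_le (hY : EIntegrable Ps Y) (hX : Measurable X) (h : ∀ ω, |X ω| ≤ Y ω) :
    EIntegrable Ps X := by
  obtain ⟨-, hYint, M, hM⟩ := hY
  have hXint : ∀ P ∈ Ps, Integrable X P := fun P hP =>
    (hYint P hP).mono' hX.aestronglyMeasurable (ae_of_all _ h)
  exact ⟨hX, hXint, M, fun P hP => (integral_mono (hXint P hP).abs (hYint P hP).abs
    fun ω => (h ω).trans (le_abs_self _)).trans (hM P hP)⟩

lemma abs (hX : EIntegrable Ps X) : EIntegrable Ps fun ω => |X ω| :=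
  ⟨hX.1.abs, fun P hP => (hX.2.1 P hP).abs, by simpa only [abs_abs] using hX.2.2⟩

lemma add (hX : EIntegrable Ps X) (hY : EIntegrable Ps Y) :
    EIntegrable Ps fun ω => X ω + Y ω := by
  obtain ⟨hXm, hXint, M, hM⟩ := hX
  obtain ⟨hYm, hYint, N, hN⟩ := hY
  refine ⟨hXm.add hYm, fun P hP => (hXint P hP).add (hYint P hP), M + N, fun P hP => ?_⟩
  calc ∫ ω, |X ω + Y ω| ∂P
      ≤ ∫ ω, (|X ω| + |Y ω|) ∂P := integral_mono ((hXint P hP).add (hYint P hP)).abs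
        ((hXint P hP).abs.add (hYint P hP).abs) fun ω => abs_add_le _ _
    _ = ∫ ω, |X ω| ∂P + ∫ ω, |Y ω| ∂P := integral_add (hXint P hP).abs (hYint P hP).abs
    _ ≤ M + N := add_le_add (hM P hP) (hN P hP)

lemma const_mul (c : ℝ) (hX : EIntegrable Ps X) : EIntegrable Ps fun ω => c * X ω := by
  obtain ⟨hXm, hXint, M, hM⟩ := hX
  refine ⟨hXm.const_mul c, fun P hP => (hXint P hP).const_mul c, |c| * M, fun P hP => ?_⟩
  simp only [abs_mul, integral_const_mul]
  exact mul_le_mul_of_nonneg_left (hM P hP) (abs_nonneg c)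

lemma sub (hX : EIntegrable Ps X) (hY : EIntegrable Ps Y) :
    EIntegrable Ps fun ω => X ω - Y ω := by
  simpa only [neg_one_mul, ← sub_eq_add_neg] using hX.add (hY.const_mul (-1))

lemma const (hprob : ∀ P ∈ Ps, IsProbabilityMeasure P) (c : ℝ) :
    EIntegrable Ps fun _ => c := by
  refine ⟨measurable_const, fun P hP => ?_, |c|, fun P hP => ?_⟩ <;> have := hprob P hP
  · exact integrable_const c
  · simp

end EIntegrable

lemma integral_le_sublinE (hX : EIntegrable Ps X) {P : Measure Ω} (hP : P ∈ Ps) :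
    ∫ ω, X ω ∂P ≤ sublinE Ps X := by
  obtain ⟨-, hXint, M, hM⟩ := hX
  refine le_csSup ⟨M, ?_⟩ (mem_image_of_mem _ hP)
  rintro _ ⟨Q, hQ, rfl⟩
  exact (integral_mono (hXint Q hQ) (hXint Q hQ).abs fun ω => le_abs_self _).trans (hM Q hQ)

lemma sublinE_abs_nonneg (X : Ω → ℝ) : 0 ≤ sublinE Ps fun ω => |X ω| := by
  apply Real.sSup_nonneg
  rintro _ ⟨P, _, rfl⟩
  exact integral_nonneg fun ω => abs_nonneg _

lemma sublinE_const_mul {c : ℝ} (hc : 0 ≤ c) (X : Ω → ℝ) :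
    sublinE Ps (fun ω => c * X ω) = c * sublinE Ps X := by
  rw [sublinE, sublinE, ← smul_eq_mul c, ← Real.sSup_smul_of_nonneg hc, ← image_smul, image_image]
  simp only [integral_const_mul, smul_eq_mul]

lemma sublinE_const (hPs : Ps.Nonempty) (hprob : ∀ P ∈ Ps, IsProbabilityMeasure P) (c : ℝ) :
    sublinE Ps (fun _ => c) = c := by
  have himage : (fun P : Measure Ω => ∫ _, c ∂P) '' Ps = (fun _ => c) '' Ps :=
    image_congr fun P hP => by have := hprob P hP; simp
  rw [sublinE, himage, hPs.image_const, csSup_singleton]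

lemma sublinE_mono (hPs : Ps.Nonempty) (hX : EIntegrable Ps X) (hY : EIntegrable Ps Y)
    (h : ∀ ω, X ω ≤ Y ω) : sublinE Ps X ≤ sublinE Ps Y := by
  refine csSup_le (hPs.image _) ?_
  rintro _ ⟨P, hP, rfl⟩
  exact (integral_mono (hX.2.1 P hP) (hY.2.1 P hP) h).trans (integral_le_sublinE hY hP)

lemma sublinE_add_le (hPs : Ps.Nonempty) (hX : EIntegrable Ps X) (hY : EIntegrable Ps Y) :
    sublinE Ps (fun ω => X ω + Y ω) ≤ sublinE Ps X + sublinE Ps Y := by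
  refine csSup_le (hPs.image _) ?_
  rintro _ ⟨P, hP, rfl⟩
  exact (integral_add (hX.2.1 P hP) (hY.2.1 P hP)).trans_le
    (add_le_add (integral_le_sublinE hX hP) (integral_le_sublinE hY hP))

lemma sublinE_abs_le_add_sublinE_abs_sub (hPs : Ps.Nonempty) (hX : EIntegrable Ps X)
    (hY : EIntegrable Ps Y) :
    sublinE Ps (fun ω => |X ω|) ≤
      sublinE Ps (fun ω => |Y ω|) + sublinE Ps fun ω => |X ω - Y ω| :=
  (sublinE_mono hPs hX.abs (hY.abs.add (hX.sub hY).abs) fun ω => by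
    linarith [abs_sub_abs_le_abs_sub (X ω) (Y ω)]).trans
    (sublinE_add_le hPs hY.abs (hX.sub hY).abs)

lemma sublinE_abs_sub_le (hPs : Ps.Nonempty) (hX : EIntegrable Ps X) (hY : EIntegrable Ps Y) :
    sublinE Ps (fun ω => |X ω - Y ω|) ≤
      sublinE Ps (fun ω => |X ω|) + sublinE Ps fun ω => |Y ω| :=
  (sublinE_mono hPs (hX.sub hY).abs (hX.abs.add hY.abs) fun ω => abs_sub (X ω) (Y ω)).trans
    (sublinE_add_le hPs hX.abs hY.abs)

lemma Hbar_zero (hPs : Ps.Nonempty) (hprob : ∀ P ∈ Ps, IsProbabilityMeasure P)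
    (hb : ℝ → Ω → ℝ → ℝ) (t x : ℝ) :
    Hbar Ps hb t x (fun _ => 0) = sublinE Ps fun ω => hb t ω x := by
  simp only [Hbar, sublinE_const hPs hprob, add_zero, sub_zero]

end SublinearExpectation

section Loss

variable {Ω : Type*} [MeasurableSpace Ω] {Ps : Set (Measure Ω)} {cl cu C : ℝ} {h : Ω → ℝ → ℝ}

/-- A random loss function at one fixed time: `ω ↦ h ω y` is measurable, the slopes of `h ω` lie
between `cl > 0` and `cu`, and `h ω 0` is bounded by `C`. It is the setting of the comparison
principle for `Ê[h(X)]`. -/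
structure IsBilipschitzLoss (cl cu C : ℝ) (h : Ω → ℝ → ℝ) : Prop where
  pos : 0 < cl
  le : cl ≤ cu
  measurable (y : ℝ) : Measurable fun ω => h ω y
  mul_sub_le (ω : Ω) {y z : ℝ} (hyz : y ≤ z) : cl * (z - y) ≤ h ω z - h ω y
  abs_sub_le (ω : Ω) (y z : ℝ) : |h ω y - h ω z| ≤ cu * |y - z|
  abs_zero_le (ω : Ω) : |h ω 0| ≤ C

lemma HrAssumption.exists_abs_barrier_le {T Ch : ℝ} {l u : ℝ → ℝ} {hb : ℝ → Ω → ℝ → ℝ}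
    (hHr : HrAssumption T cl cu Ch l u hb) : ∃ M, ∀ s ∈ Icc 0 T, |l s| ≤ M ∧ |u s| ≤ M :=
  hHr.2.2.2.2.2.1

lemma HrAssumption.isBilipschitzLoss {T Ch : ℝ} {l u : ℝ → ℝ} {hb : ℝ → Ω → ℝ → ℝ}
    (hHr : HrAssumption T cl cu Ch l u hb) (t : ℝ) : IsBilipschitzLoss cl cu Ch (hb t) := by
  obtain ⟨hcl, hclu, -, -, -, -, -, hmeas, -, hmono, hgrowth, hlip⟩ := hHr
  refine ⟨hcl, hclu, hmeas t, fun ω y z hyz => ?_, fun ω y z => (hlip t ω y z).2, fun ω => ?_⟩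
  · rw [← abs_of_nonneg (sub_nonneg.2 hyz),
      ← abs_of_nonneg (sub_nonneg.2 ((hmono t ω).monotone hyz))]
    exact (hlip t ω z y).1
  · simpa using hgrowth t ω 0

namespace IsBilipschitzLoss

lemma ratio_nonneg (hh : IsBilipschitzLoss cl cu C h) : 0 ≤ cu / cl :=
  div_nonneg (hh.pos.le.trans hh.le) hh.pos.le

lemma eIntegrable_comp (hh : IsBilipschitzLoss cl cu C h)
    (hprob : ∀ P ∈ Ps, IsProbabilityMeasure P) {X : Ω → ℝ} (hX : EIntegrable Ps X) :
    EIntegrable Ps fun ω => h ω (X ω) := by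
  have hcont : ∀ ω, Continuous (h ω) := fun ω =>
    (LipschitzWith.of_dist_le' fun y z => hh.abs_sub_le ω y z).continuous
  have hmeas : Measurable fun ω => h ω (X ω) :=
    (measurable_uncurry_of_continuous_of_measurable (u := fun y ω => h ω y) hcont
      hh.measurable).comp (hX.1.prodMk measurable_id)
  refine ((hX.abs.const_mul cu).add (.const hprob C)).of_abs_le hmeas fun ω => ?_
  calc |h ω (X ω)| = |(h ω (X ω) - h ω 0) + h ω 0| := by rw [sub_add_cancel]
    _ ≤ |h ω (X ω) - h ω 0| + |h ω 0| := abs_add_le _ _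
    _ ≤ cu * |X ω| + C :=
      add_le_add (by simpa using hh.abs_sub_le ω (X ω) 0) (hh.abs_zero_le ω)

lemma sub_le_of_sublinE_le (hh : IsBilipschitzLoss cl cu C h) (hPs : Ps.Nonempty)
    (hprob : ∀ P ∈ Ps, IsProbabilityMeasure P) {X W : Ω → ℝ} (hX : EIntegrable Ps X)
    (hW : EIntegrable Ps W) {x w : ℝ}
    (hle : sublinE Ps (fun ω => h ω (X ω + x)) ≤ sublinE Ps fun ω => h ω (W ω + w)) :
    x - w ≤ cu / cl * sublinE Ps fun ω => |X ω - W ω| := by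
  have hcu : 0 ≤ cu := hh.pos.le.trans hh.le
  rcases le_total x w with hxw | hwx
  · exact (sub_nonpos.2 hxw).trans
      (mul_nonneg hh.ratio_nonneg (sublinE_abs_nonneg _))
  have hXx := hh.eIntegrable_comp hprob (hX.add (.const hprob x))
  have hWw := hh.eIntegrable_comp hprob (hW.add (.const hprob w))
  have hdiff := (hX.sub hW).abs.const_mul cu
  have hpoint : ∀ ω, cl * (x - w) + h ω (W ω + w) ≤ h ω (X ω + x) + cu * |X ω - W ω| := by
    intro ω
    have hshift := hh.mul_sub_le ω (add_le_add_right hwx (X ω))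
    have hlip := (abs_le.1 (hh.abs_sub_le ω (X ω + w) (W ω + w))).1
    rw [add_sub_add_left_eq_sub] at hshift
    rw [add_sub_add_right_eq_sub] at hlip
    linarith
  have hsum := calc
    sublinE Ps (fun ω => h ω (W ω + w))
      ≤ sublinE Ps fun ω => h ω (X ω + x) + cu * |X ω - W ω| + -(cl * (x - w)) :=
        sublinE_mono hPs hWw ((hXx.add hdiff).add (.const hprob _)) fun ω => by
          linarith [hpoint ω]
    _ ≤ sublinE Ps (fun ω => h ω (X ω + x) + cu * |X ω - W ω|) + -(cl * (x - w)) :=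
        (sublinE_add_le hPs (hXx.add hdiff) (.const hprob _)).trans_eq
          (by rw [sublinE_const hPs hprob])
    _ ≤ sublinE Ps (fun ω => h ω (X ω + x)) + cu * sublinE Ps (fun ω => |X ω - W ω|)
          + -(cl * (x - w)) := by
        grw [sublinE_add_le hPs hXx hdiff, sublinE_const_mul hcu]
  rw [div_mul_eq_mul_div, le_div_iff₀ hh.pos]
  linarith

lemma abs_le_of_sublinE_mem_Icc (hh : IsBilipschitzLoss cl cu C h) (hPs : Ps.Nonempty)
    (hprob : ∀ P ∈ Ps, IsProbabilityMeasure P) {X : Ω → ℝ} (hX : EIntegrable Ps X) {a b x : ℝ}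
    (hmem : sublinE Ps (fun ω => h ω (X ω + x)) ∈
      Icc (sublinE Ps fun ω => h ω a) (sublinE Ps fun ω => h ω b)) :
    |x| ≤ max |a| |b| + cu / cl * sublinE Ps fun ω => |X ω| := by
  have hzero := EIntegrable.const hprob 0
  have hupper : x - b ≤ cu / cl * sublinE Ps fun ω => |X ω| := by
    simpa using hh.sub_le_of_sublinE_le hPs hprob hX hzero (x := x) (w := b)
      (by simpa using hmem.2)
  have hlower : a - x ≤ cu / cl * sublinE Ps fun ω => |X ω| := by
    simpa using hh.sub_le_of_sublinE_le hPs hprob hzero hX (x := a) (w := x)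
      (by simpa using hmem.1)
  have ha := (neg_abs_le a).trans' (neg_le_neg (le_max_left |a| |b|))
  have hb := (le_abs_self b).trans (le_max_right |a| |b|)
  exact abs_le.2 ⟨by linarith, by linarith⟩

lemma abs_le_of_abs_sublinE_le (hh : IsBilipschitzLoss cl cu C h) (hPs : Ps.Nonempty)
    (hprob : ∀ P ∈ Ps, IsProbabilityMeasure P) {x M : ℝ}
    (hM : |sublinE Ps fun ω => h ω x| ≤ M) : |x| ≤ (M + C) / cl := by
  have hx := hh.eIntegrable_comp hprob (.const hprob x)
  have hconst := fun c => EIntegrable.const (Ps := Ps) hprob c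
  rw [abs_le] at hM
  rw [le_div_iff₀ hh.pos, mul_comm]
  rcases le_total 0 x with h0 | h0
  · have hlower : cl * x - C ≤ sublinE Ps fun ω => h ω x := by
      rw [← sublinE_const hPs hprob (cl * x - C)]
      exact sublinE_mono hPs (hconst _) hx fun ω => by
        linarith [hh.mul_sub_le ω h0, (abs_le.1 (hh.abs_zero_le ω)).1]
    rw [abs_of_nonneg h0]
    linarith
  · have hupper : (sublinE Ps fun ω => h ω x) ≤ cl * x + C := by
      rw [← sublinE_const hPs hprob (cl * x + C)]
      exact sublinE_mono hPs hx (hconst _) fun ω => by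
        linarith [hh.mul_sub_le ω h0, (abs_le.1 (hh.abs_zero_le ω)).2]
    rw [abs_of_nonpos h0]
    linarith

end IsBilipschitzLoss

end Loss

section ThetaDiff

/-- The `θ`-difference `δ_θ(x, y) = (x - θ y) / (1 - θ)` of two reals. The paper's `δ_θφ` is
`thetaDiff θ φ¹ φ²` and its `δ̃_θφ` is `thetaDiff θ φ² φ¹`. -/
noncomputable def thetaDiff (θ x y : ℝ) : ℝ :=
  (x - θ * y) / (1 - θ)

variable {θ : ℝ}

lemma thetaDiff_add (θ x y a b : ℝ) :
    thetaDiff θ (x + a) (y + b) = thetaDiff θ x y + thetaDiff θ a b := by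
  simp only [thetaDiff]
  ring

lemma thetaDiff_neg (θ x y : ℝ) : thetaDiff θ (-x) (-y) = -thetaDiff θ x y := by
  simp only [thetaDiff]
  ring

lemma thetaDiff_eq_sub_div_add (hθ : θ < 1) (x y : ℝ) :
    thetaDiff θ x y = (x - y) / (1 - θ) + y := by
  have hne : 1 - θ ≠ 0 := (sub_pos.2 hθ).ne'
  simp only [thetaDiff]
  field_simp
  ring

lemma thetaDiff_le_thetaDiff (hθ : θ ∈ Ico (0 : ℝ) 1) {x x' y y' : ℝ} (hx : x ≤ x')
    (hy : y' ≤ y) : thetaDiff θ x y ≤ thetaDiff θ x' y' := by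
  have hnonneg := hθ.1
  have hpos : 0 < 1 - θ := sub_pos.2 hθ.2
  simp only [thetaDiff]
  gcongr

variable {Ω : Type*} [MeasurableSpace Ω] {Ps : Set (Measure Ω)} {X Y : Ω → ℝ}

lemma EIntegrable.thetaDiff (θ : ℝ) (hX : EIntegrable Ps X) (hY : EIntegrable Ps Y) :
    EIntegrable Ps fun ω => thetaDiff θ (X ω) (Y ω) := by
  simpa only [_root_.thetaDiff, div_eq_inv_mul] using
    (hX.sub (hY.const_mul θ)).const_mul (1 - θ)⁻¹

lemma sublinE_abs_sub_le_thetaDiff (hPs : Ps.Nonempty) (hθ : θ < 1) (hX : EIntegrable Ps X)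
    (hY : EIntegrable Ps Y) :
    sublinE Ps (fun ω => |X ω - Y ω|) ≤ (1 - θ) *
      (sublinE Ps (fun ω => |thetaDiff θ (X ω) (Y ω)|) + sublinE Ps fun ω => |Y ω|) := by
  have hpos : 0 < 1 - θ := sub_pos.2 hθ
  have hpoint : ∀ ω, |X ω - Y ω| = (1 - θ) * |thetaDiff θ (X ω) (Y ω) - Y ω| := fun ω => by
    rw [thetaDiff_eq_sub_div_add hθ, add_sub_cancel_right, abs_div, abs_of_pos hpos,
      mul_div_cancel₀ _ hpos.ne']
  simp only [hpoint, sublinE_const_mul hpos.le]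
  gcongr
  exact sublinE_abs_sub_le hPs (hX.thetaDiff θ hY) hY

variable {cl cu C a b : ℝ} {h : Ω → ℝ → ℝ}

lemma IsBilipschitzLoss.thetaDiff_le_of_sublinE_le (hh : IsBilipschitzLoss cl cu C h)
    (hPs : Ps.Nonempty) (hprob : ∀ P ∈ Ps, IsProbabilityMeasure P) (hθ : θ < 1)
    (hX : EIntegrable Ps X) (hY : EIntegrable Ps Y)
    (hle : sublinE Ps (fun ω => h ω (X ω + a)) ≤ sublinE Ps fun ω => h ω (Y ω + b)) :
    thetaDiff θ a b ≤ |b| + cu / cl *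
      (sublinE Ps (fun ω => |thetaDiff θ (X ω) (Y ω)|) + sublinE Ps fun ω => |Y ω|) := by
  have hq := hh.ratio_nonneg
  have hdiff : (a - b) / (1 - θ) ≤ cu / cl *
      (sublinE Ps (fun ω => |thetaDiff θ (X ω) (Y ω)|) + sublinE Ps fun ω => |Y ω|) := by
    rw [div_le_iff₀' (sub_pos.2 hθ), mul_left_comm]
    grw [hh.sub_le_of_sublinE_le hPs hprob hX hY hle, sublinE_abs_sub_le_thetaDiff hPs hθ hX hY]
  rw [thetaDiff_eq_sub_div_add hθ]
  linarith [le_abs_self b]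

lemma IsBilipschitzLoss.neg_thetaDiff_le_of_sublinE_le (hh : IsBilipschitzLoss cl cu C h)
    (hPs : Ps.Nonempty) (hprob : ∀ P ∈ Ps, IsProbabilityMeasure P) (hθ : θ < 1)
    (hX : EIntegrable Ps X) (hY : EIntegrable Ps Y)
    (hle : sublinE Ps (fun ω => h ω (Y ω + b)) ≤ sublinE Ps fun ω => h ω (X ω + a)) :
    -thetaDiff θ a b ≤ |b| + cu / cl *
      (sublinE Ps (fun ω => |thetaDiff θ (X ω) (Y ω)|) + sublinE Ps fun ω => |Y ω|) := by
  have hq := hh.ratio_nonneg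
  have hdiff : (b - a) / (1 - θ) ≤ cu / cl *
      (sublinE Ps (fun ω => |thetaDiff θ (X ω) (Y ω)|) + sublinE Ps fun ω => |Y ω|) := by
    rw [div_le_iff₀' (sub_pos.2 hθ), mul_left_comm]
    grw [hh.sub_le_of_sublinE_le hPs hprob hY hX hle]
    simp only [abs_sub_comm (Y _)]
    grw [sublinE_abs_sub_le_thetaDiff hPs hθ hX hY]
  rw [thetaDiff_eq_sub_div_add hθ, neg_add, ← neg_div, neg_sub]
  linarith [neg_abs_le b]

end ThetaDiff

section BoundedInMean

variable {Ω : Type*} [MeasurableSpace Ω] {Ps : Set (Measure Ω)} {ι : Type*} {I J : Set ι}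
  {S S' : ι → Ω → ℝ}

/-- The family `S` is bounded in `Ê`-mean on the index set `I`: each `S i` with `i ∈ I` is
Ê-integrable, and `Ê[|S i|]` is bounded over `i ∈ I`, so that the suprema in the estimate are
finite. -/
def BoundedInMean (Ps : Set (Measure Ω)) (I : Set ι) (S : ι → Ω → ℝ) : Prop :=
  (∀ i ∈ I, EIntegrable Ps (S i)) ∧ BddAbove ((fun i => sublinE Ps fun ω => |S i ω|) '' I)

namespace BoundedInMean

lemma mono (hS : BoundedInMean Ps I S) (hJI : J ⊆ I) : BoundedInMean Ps J S :=
  ⟨fun i hi => hS.1 i (hJI hi), hS.2.mono (image_mono hJI)⟩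

lemma sublinE_abs_le_sSup (hS : BoundedInMean Ps I S) {i : ι} (hi : i ∈ I) :
    sublinE Ps (fun ω => |S i ω|) ≤ sSup ((fun i => sublinE Ps fun ω => |S i ω|) '' I) :=
  le_csSup hS.2 (mem_image_of_mem _ hi)

lemma const_mul (c : ℝ) (hS : BoundedInMean Ps I S) :
    BoundedInMean Ps I fun i ω => c * S i ω := by
  obtain ⟨hint, M, hM⟩ := hS
  refine ⟨fun i hi => (hint i hi).const_mul c, |c| * M, ?_⟩
  rintro _ ⟨i, hi, rfl⟩
  simp only [abs_mul, sublinE_const_mul (abs_nonneg c)]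
  exact mul_le_mul_of_nonneg_left (hM (mem_image_of_mem _ hi)) (abs_nonneg c)

lemma sub (hPs : Ps.Nonempty) (hS : BoundedInMean Ps I S) (hS' : BoundedInMean Ps I S') :
    BoundedInMean Ps I fun i ω => S i ω - S' i ω := by
  obtain ⟨hint, M, hM⟩ := hS
  obtain ⟨hint', M', hM'⟩ := hS'
  refine ⟨fun i hi => (hint i hi).sub (hint' i hi), M + M', ?_⟩
  rintro _ ⟨i, hi, rfl⟩
  exact (sublinE_abs_sub_le hPs (hint i hi) (hint' i hi)).trans
    (add_le_add (hM (mem_image_of_mem _ hi)) (hM' (mem_image_of_mem _ hi)))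

lemma thetaDiff (hPs : Ps.Nonempty) (θ : ℝ) (hS : BoundedInMean Ps I S)
    (hS' : BoundedInMean Ps I S') :
    BoundedInMean Ps I fun i ω => thetaDiff θ (S i ω) (S' i ω) := by
  simpa only [_root_.thetaDiff, div_eq_inv_mul] using
    (hS.sub hPs (hS'.const_mul θ)).const_mul (1 - θ)⁻¹

end BoundedInMean

namespace MeanContinuous

variable {T : ℝ} {S : ℝ → Ω → ℝ}

lemma continuousOn_sublinE_abs (hPs : Ps.Nonempty) (hS : MeanContinuous Ps T S) :
    ContinuousOn (fun s => sublinE Ps fun ω => |S s ω|) (Icc 0 T) := by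
  intro t ht
  refine tendsto_iff_dist_tendsto_zero.2 (squeeze_zero' (Eventually.of_forall fun _ => dist_nonneg)
    ?_ (hS.2 t ht))
  filter_upwards [self_mem_nhdsWithin] with s hs
  have hst := sublinE_abs_le_add_sublinE_abs_sub hPs (hS.1 s hs) (hS.1 t ht)
  have hts := sublinE_abs_le_add_sublinE_abs_sub hPs (hS.1 t ht) (hS.1 s hs)
  simp only [abs_sub_comm (S t _)] at hts
  rw [Real.dist_eq, abs_sub_le_iff]
  exact ⟨sub_le_iff_le_add'.2 hst, sub_le_iff_le_add'.2 hts⟩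

lemma boundedInMean (hPs : Ps.Nonempty) (hS : MeanContinuous Ps T S) :
    BoundedInMean Ps (Icc 0 T) S :=
  ⟨hS.1, isCompact_Icc.bddAbove_image (hS.continuousOn_sublinE_abs hPs)⟩

end MeanContinuous

end BoundedInMean

section Minimality

lemma le_of_continuousOn_of_forall_lt_imp_le {D : ℝ → ℝ} {t T k : ℝ} (htT : t ≤ T)
    (hD : ContinuousOn D (Icc t T)) (hT : D T ≤ k)
    (h : ∀ s ∈ Ioc t T, (∀ v ∈ Ioc t s, k < D v) → D t ≤ D s) : D t ≤ k := by
  by_contra! hlt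
  have hcompact : IsCompact (Icc t T ∩ D ⁻¹' Iic k) :=
    isCompact_Icc.of_isClosed_subset (hD.preimage_isClosed_of_isClosed isClosed_Icc isClosed_Iic)
      inter_subset_left
  obtain ⟨τ, ⟨hτ, hDτ⟩, hmin⟩ := hcompact.exists_isLeast ⟨T, right_mem_Icc.2 htT, hT⟩
  have htτ : t < τ := hτ.1.lt_of_ne fun heq => hlt.not_ge (heq ▸ hDτ)
  have hbefore : ∀ v ∈ Ioo t τ, k < D v := fun v hv =>
    not_le.1 fun hle => hv.2.not_ge (hmin ⟨⟨hv.1.le, hv.2.le.trans hτ.2⟩, hle⟩)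
  have hincr : ∀ s ∈ Ioo t τ, D t ≤ D s := fun s hs =>
    h s ⟨hs.1, hs.2.le.trans hτ.2⟩ fun v hv => hbefore v ⟨hv.1, hv.2.trans_lt hs.2⟩
  have hlim : Tendsto D (nhdsWithin τ (Ioo t τ)) (nhds (D τ)) :=
    (hD τ hτ).mono (Ioo_subset_Icc_self.trans (Icc_subset_Icc_right hτ.2))
  have := right_nhdsWithin_Ioo_neBot htτ
  exact hlt.not_ge ((ge_of_tendsto hlim (eventually_mem_nhdsWithin.mono hincr)).trans hDτ)

namespace MinimalityIncr

variable {T θ K t : ℝ} {φ φ₁ φ₂ l u R R₁ R₂ : ℝ → ℝ}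

lemma neg (hR : MinimalityIncr T φ l u R) :
    MinimalityIncr T (fun v => -φ v) (fun v => -u v) (fun v => -l v) fun v => -R v := by
  intro s t hs hst ht
  simpa only [neg_lt_neg_iff, neg_le_neg_iff] using (hR s t hs hst ht).symm

lemma thetaDiff_le (hmin₁ : MinimalityIncr T φ₁ l u R₁) (hmin₂ : MinimalityIncr T φ₂ l u R₂)
    (hR₁ : ContinuousOn R₁ (Icc 0 T)) (hR₂ : ContinuousOn R₂ (Icc 0 T)) (hθ : θ ∈ Ico (0 : ℝ) 1)
    (ht : t ∈ Icc 0 T) (hφ₁ : ∀ v ∈ Icc t T, φ₁ v ≤ u v) (hφ₂ : ∀ v ∈ Icc t T, l v ≤ φ₂ v)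
    (hK : 0 ≤ K)
    (hcomp : ∀ v ∈ Icc t T, φ₁ v ≤ φ₂ v → thetaDiff θ (R₁ T - R₁ v) (R₂ T - R₂ v) ≤ K) :
    thetaDiff θ (R₁ T - R₁ t) (R₂ T - R₂ t) ≤ K := by
  have hsub : Icc t T ⊆ Icc 0 T := Icc_subset_Icc_left ht.1
  let D v := thetaDiff θ (R₁ T - R₁ v) (R₂ T - R₂ v)
  have hcont : ContinuousOn D (Icc t T) :=
    ((continuousOn_const.sub (hR₁.mono hsub)).sub
      (continuousOn_const.mul (continuousOn_const.sub (hR₂.mono hsub)))).div_const _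
  have hterm : D T ≤ K := by simpa [D, thetaDiff] using hK
  refine le_of_continuousOn_of_forall_lt_imp_le (D := D) ht.2 hcont hterm fun s hs hgt => ?_
  have hmem : ∀ {v}, t < v → v ≤ s → v ∈ Icc t T := fun htv hvs => ⟨htv.le, hvs.trans hs.2⟩
  have hlt : ∀ v, t < v → v ≤ s → φ₂ v < φ₁ v := fun v htv hvs =>
    not_le.1 fun hle => (hgt v ⟨htv, hvs⟩).not_ge (hcomp v (hmem htv hvs) hle)
  have hR₁le : R₁ s ≤ R₁ t := (hmin₁ t s ht.1 hs.1 hs.2).2 fun v htv hvs =>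
    (hφ₂ v (hmem htv hvs)).trans_lt (hlt v htv hvs)
  have hR₂le : R₂ t ≤ R₂ s := (hmin₂ t s ht.1 hs.1 hs.2).1 fun v htv hvs =>
    (hlt v htv hvs).trans_le (hφ₁ v (hmem htv hvs))
  exact thetaDiff_le_thetaDiff hθ (sub_le_sub_left hR₁le _) (sub_le_sub_left hR₂le _)

lemma neg_thetaDiff_le (hmin₁ : MinimalityIncr T φ₁ l u R₁) (hmin₂ : MinimalityIncr T φ₂ l u R₂)
    (hR₁ : ContinuousOn R₁ (Icc 0 T)) (hR₂ : ContinuousOn R₂ (Icc 0 T)) (hθ : θ ∈ Ico (0 : ℝ) 1)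
    (ht : t ∈ Icc 0 T) (hφ₁ : ∀ v ∈ Icc t T, l v ≤ φ₁ v) (hφ₂ : ∀ v ∈ Icc t T, φ₂ v ≤ u v)
    (hK : 0 ≤ K)
    (hcomp : ∀ v ∈ Icc t T, φ₂ v ≤ φ₁ v → -thetaDiff θ (R₁ T - R₁ v) (R₂ T - R₂ v) ≤ K) :
    -thetaDiff θ (R₁ T - R₁ t) (R₂ T - R₂ t) ≤ K := by
  have hreflect : ∀ v, thetaDiff θ (-R₁ T - -R₁ v) (-R₂ T - -R₂ v) =
      -thetaDiff θ (R₁ T - R₁ v) (R₂ T - R₂ v) := fun v => by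
    rw [← thetaDiff_neg, neg_sub_neg, neg_sub_neg, neg_sub, neg_sub]
  rw [← hreflect]
  refine hmin₁.neg.thetaDiff_le hmin₂.neg hR₁.neg hR₂.neg hθ ht
    (fun v hv => neg_le_neg (hφ₁ v hv)) (fun v hv => neg_le_neg (hφ₂ v hv)) hK fun v hv hle => ?_
  rw [hreflect]
  exact hcomp v hv (neg_le_neg_iff.1 hle)

end MinimalityIncr

end Minimality

section BackwardSkorokhod

variable {Ω : Type*} [MeasurableSpace Ω] {Ps : Set (Measure Ω)} {T cl cu C θ a b m t : ℝ}
  {l u L₀ U₀ : ℝ → ℝ} {hb : ℝ → Ω → ℝ → ℝ} {Ybar Y Ybar₁ Ybar₂ Y₁ Y₂ : ℝ → Ω → ℝ}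
  {R R₁ R₂ : ℝ → ℝ}

namespace IsBSPsol

lemma eq_add_sub (hsol : IsBSPsol Ps T hb l u Ybar Y R) (ht : t ∈ Icc 0 T) (ω : Ω) :
    Y t ω = Ybar t ω + (R T - R t) := by
  rw [hsol.1 t ht ω, add_sub_assoc]

lemma sublinE_mem_Icc (hsol : IsBSPsol Ps T hb l u Ybar Y R) (ht : t ∈ Icc 0 T) :
    sublinE Ps (fun ω => hb t ω (Y t ω)) ∈ Icc (l t) (u t) :=
  hsol.2.1 t ht

lemma abs_increment_le (hsol : IsBSPsol Ps T hb l u Ybar Y R) (hPs : Ps.Nonempty)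
    (hprob : ∀ P ∈ Ps, IsProbabilityMeasure P) (hloss : IsBilipschitzLoss cl cu C (hb t))
    (ht : t ∈ Icc 0 T) (hYbar : EIntegrable Ps (Ybar t)) {x y : ℝ}
    (hx : sublinE Ps (fun ω => hb t ω x) = l t) (hy : sublinE Ps (fun ω => hb t ω y) = u t) :
    |R T - R t| ≤ max |x| |y| + cu / cl * sublinE Ps fun ω => |Ybar t ω| := by
  have hmem := hsol.sublinE_mem_Icc ht
  simp only [hsol.eq_add_sub ht] at hmem
  exact hloss.abs_le_of_sublinE_mem_Icc hPs hprob hYbar (by rwa [hx, hy])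

theorem abs_thetaDiff_increment_le (hsol₁ : IsBSPsol Ps T hb l u Ybar₁ Y₁ R₁)
    (hsol₂ : IsBSPsol Ps T hb l u Ybar₂ Y₂ R₂) (hPs : Ps.Nonempty)
    (hprob : ∀ P ∈ Ps, IsProbabilityMeasure P) (hθ : θ ∈ Ico (0 : ℝ) 1) (ht : t ∈ Icc 0 T)
    (hloss : ∀ s ∈ Icc t T, IsBilipschitzLoss cl cu C (hb s))
    (hint₁ : ∀ s ∈ Icc t T, EIntegrable Ps (Ybar₁ s))
    (hint₂ : ∀ s ∈ Icc t T, EIntegrable Ps (Ybar₂ s))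
    (ha : ∀ s ∈ Icc t T, sublinE Ps (fun ω => |thetaDiff θ (Ybar₁ s ω) (Ybar₂ s ω)|) ≤ a)
    (hb₂ : ∀ s ∈ Icc t T, sublinE Ps (fun ω => |Ybar₂ s ω|) ≤ b)
    (hm : ∀ s ∈ Icc t T, |R₂ T - R₂ s| ≤ m) :
    |thetaDiff θ (R₁ T - R₁ t) (R₂ T - R₂ t)| ≤ m + cu / cl * (a + b) := by
  have hsub : Icc t T ⊆ Icc 0 T := Icc_subset_Icc_left ht.1
  have htT : t ∈ Icc t T := left_mem_Icc.2 ht.2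
  have hq := (hloss t htT).ratio_nonneg
  have hbound : ∀ s ∈ Icc t T, |R₂ T - R₂ s| + cu / cl *
      (sublinE Ps (fun ω => |thetaDiff θ (Ybar₁ s ω) (Ybar₂ s ω)|) +
        sublinE Ps fun ω => |Ybar₂ s ω|) ≤ m + cu / cl * (a + b) := fun s hs => by
    grw [hm s hs, ha s hs, hb₂ s hs]
  have hK : 0 ≤ m + cu / cl * (a + b) := (hbound t htT).trans' <|
    add_nonneg (abs_nonneg _) <|
      mul_nonneg hq (add_nonneg (sublinE_abs_nonneg _) (sublinE_abs_nonneg _))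
  have hmem₁ := fun v (hv : v ∈ Icc t T) => hsol₁.sublinE_mem_Icc (hsub hv)
  have hmem₂ := fun v (hv : v ∈ Icc t T) => hsol₂.sublinE_mem_Icc (hsub hv)
  have heq₁ := fun v (hv : v ∈ Icc t T) => hsol₁.eq_add_sub (hsub hv)
  have heq₂ := fun v (hv : v ∈ Icc t T) => hsol₂.eq_add_sub (hsub hv)
  obtain ⟨-, -, hR₁, -, -, hmin₁⟩ := hsol₁
  obtain ⟨-, -, hR₂, -, -, hmin₂⟩ := hsol₂
  refine abs_le'.2 ⟨?_, ?_⟩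
  · refine hmin₁.thetaDiff_le hmin₂ hR₁ hR₂ hθ ht (fun v hv => (hmem₁ v hv).2)
      (fun v hv => (hmem₂ v hv).1) hK fun v hv hle => (hbound v hv).trans' ?_
    simp only [heq₁ v hv, heq₂ v hv] at hle
    exact (hloss v hv).thetaDiff_le_of_sublinE_le hPs hprob hθ.2 (hint₁ v hv) (hint₂ v hv) hle
  · refine hmin₁.neg_thetaDiff_le hmin₂ hR₁ hR₂ hθ ht (fun v hv => (hmem₁ v hv).1)
      (fun v hv => (hmem₂ v hv).2) hK fun v hv hle => (hbound v hv).trans' ?_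
    simp only [heq₁ v hv, heq₂ v hv] at hle
    exact (hloss v hv).neg_thetaDiff_le_of_sublinE_le hPs hprob hθ.2 (hint₁ v hv) (hint₂ v hv) hle

end IsBSPsol

lemma bddAbove_max_abs_barrier {I : Set ℝ} (hPs : Ps.Nonempty)
    (hprob : ∀ P ∈ Ps, IsProbabilityMeasure P)
    (hloss : ∀ s ∈ I, IsBilipschitzLoss cl cu C (hb s))
    (hlu : ∃ M, ∀ s ∈ I, |l s| ≤ M ∧ |u s| ≤ M)
    (hL₀ : ∀ s ∈ I, sublinE Ps (fun ω => hb s ω (L₀ s)) = l s)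
    (hU₀ : ∀ s ∈ I, sublinE Ps (fun ω => hb s ω (U₀ s)) = u s) :
    BddAbove ((fun s => max |L₀ s| |U₀ s|) '' I) := by
  obtain ⟨M, hM⟩ := hlu
  refine ⟨(M + C) / cl, ?_⟩
  rintro _ ⟨s, hs, rfl⟩
  exact max_le
    ((hloss s hs).abs_le_of_abs_sublinE_le hPs hprob ((hL₀ s hs).symm ▸ (hM s hs).1))
    ((hloss s hs).abs_le_of_abs_sublinE_le hPs hprob ((hU₀ s hs).symm ▸ (hM s hs).2))

theorem IsBSPsol.abs_thetaDiff_le (hsol₁ : IsBSPsol Ps T hb l u Ybar₁ Y₁ R₁)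
    (hsol₂ : IsBSPsol Ps T hb l u Ybar₂ Y₂ R₂) (hPs : Ps.Nonempty)
    (hprob : ∀ P ∈ Ps, IsProbabilityMeasure P)
    (hloss : ∀ s ∈ Icc 0 T, IsBilipschitzLoss cl cu C (hb s))
    (hlu : ∃ M, ∀ s ∈ Icc 0 T, |l s| ≤ M ∧ |u s| ≤ M)
    (hL₀ : ∀ s ∈ Icc 0 T, Hbar Ps hb s (L₀ s) (fun _ => 0) = l s)
    (hU₀ : ∀ s ∈ Icc 0 T, Hbar Ps hb s (U₀ s) (fun _ => 0) = u s)
    (hθ : θ ∈ Ico (0 : ℝ) 1)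
    (hYbar₁ : BoundedInMean Ps (Icc 0 T) Ybar₁) (hYbar₂ : BoundedInMean Ps (Icc 0 T) Ybar₂)
    (ht : t ∈ Icc 0 T) (ω : Ω) :
    |thetaDiff θ (Y₁ t ω) (Y₂ t ω)| ≤
      |thetaDiff θ (Ybar₁ t ω) (Ybar₂ t ω)| +
        sSup ((fun s => max |L₀ s| |U₀ s|) '' Icc t T) +
        cu / cl * (sSup ((fun s => sublinE Ps fun ω' =>
            |thetaDiff θ (Ybar₁ s ω') (Ybar₂ s ω')|) '' Icc t T) +
          2 * sSup ((fun s => sublinE Ps fun ω' => |Ybar₂ s ω'|) '' Icc t T)) := by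
  have hsub : Icc t T ⊆ Icc 0 T := Icc_subset_Icc_left ht.1
  have hq := (hloss t ht).ratio_nonneg
  simp only [Hbar_zero hPs hprob] at hL₀ hU₀
  have hYt₁ := hYbar₁.mono hsub
  have hYt₂ := hYbar₂.mono hsub
  have hbarrier := (bddAbove_max_abs_barrier hPs hprob hloss hlu hL₀ hU₀).mono (image_mono hsub)
  have hR₂ : ∀ s ∈ Icc t T, |R₂ T - R₂ s| ≤ sSup ((fun s => max |L₀ s| |U₀ s|) '' Icc t T) +
      cu / cl * sSup ((fun s => sublinE Ps fun ω' => |Ybar₂ s ω'|) '' Icc t T) := fun s hs =>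
    (hsol₂.abs_increment_le hPs hprob (hloss s (hsub hs)) (hsub hs) (hYt₂.1 s hs)
      (hL₀ s (hsub hs)) (hU₀ s (hsub hs))).trans <|
      add_le_add (le_csSup hbarrier (mem_image_of_mem _ hs))
        (mul_le_mul_of_nonneg_left (hYt₂.sublinE_abs_le_sSup hs) hq)
  have hincr := hsol₁.abs_thetaDiff_increment_le hsol₂ hPs hprob hθ ht
    (fun s hs => hloss s (hsub hs)) hYt₁.1 hYt₂.1
    (fun s hs => (hYt₁.thetaDiff hPs θ hYt₂).sublinE_abs_le_sSup hs)
    (fun s hs => hYt₂.sublinE_abs_le_sSup hs) hR₂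
  rw [hsol₁.eq_add_sub ht, hsol₂.eq_add_sub ht, thetaDiff_add]
  grw [abs_add_le, hincr]
  exact le_of_eq (by ring)

/-- The paper's constant `C₀′(t, T, Ȳ¹, Ȳ²)`, for a general index set `I` in place of `[t, T]`;
`L₀ s` and `U₀ s` stand for `L_s(0)` and `U_s(0)`. -/
noncomputable def aprioriConst (Ps : Set (Measure Ω)) (cl cu : ℝ) (l u L₀ U₀ : ℝ → ℝ)
    (S₁ S₂ : ℝ → Ω → ℝ) (I : Set ℝ) : ℝ :=
  (2 / cl) * sSup ((fun s => max |l s| |u s|) '' I) +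
    (cu / cl) * sSup ((fun s => max |L₀ s| |U₀ s|) '' I) +
    (2 * cu * (cl + cu) / cl ^ 2) *
      (sSup ((fun s => sublinE Ps fun ω => |S₁ s ω|) '' I) +
        sSup ((fun s => sublinE Ps fun ω => |S₂ s ω|) '' I))

lemma aprioriConst_comm (Ps : Set (Measure Ω)) (cl cu : ℝ) (l u L₀ U₀ : ℝ → ℝ)
    (S₁ S₂ : ℝ → Ω → ℝ) (I : Set ℝ) :
    aprioriConst Ps cl cu l u L₀ U₀ S₁ S₂ I = aprioriConst Ps cl cu l u L₀ U₀ S₂ S₁ I := by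
  simp only [aprioriConst, add_comm (sSup ((fun s => sublinE Ps fun ω => |S₁ s ω|) '' I))]

lemma sharp_bound_le_aprioriConst (hcl : 0 < cl) (hclu : cl ≤ cu) (l u L₀ U₀ : ℝ → ℝ)
    (S₁ S₂ D : ℝ → Ω → ℝ) (I : Set ℝ) (y : ℝ) :
    y + sSup ((fun s => max |L₀ s| |U₀ s|) '' I) +
        cu / cl * (sSup ((fun s => sublinE Ps fun ω => |D s ω|) '' I) +
          2 * sSup ((fun s => sublinE Ps fun ω => |S₂ s ω|) '' I)) ≤
      aprioriConst Ps cl cu l u L₀ U₀ S₁ S₂ I + y +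
        (1 + 2 * cu / cl) * sSup ((fun s => sublinE Ps fun ω => |D s ω|) '' I) := by
  have hmax (f g : ℝ → ℝ) : 0 ≤ sSup ((fun s => max |f s| |g s|) '' I) :=
    Real.sSup_nonneg (forall_mem_image.2 fun s _ => le_max_of_le_left (abs_nonneg _))
  have hmean (S : ℝ → Ω → ℝ) : 0 ≤ sSup ((fun s => sublinE Ps fun ω => |S s ω|) '' I) :=
    Real.sSup_nonneg (forall_mem_image.2 fun s _ => sublinE_abs_nonneg (S s))
  have hq : 1 ≤ cu / cl := (one_le_div hcl).2 hclu
  have hcoef : 2 * cu * (cl + cu) / cl ^ 2 = 2 * (cu / cl) + 2 * (cu / cl) ^ 2 := by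
    field_simp
  have hbarrier : 0 ≤ 2 / cl * sSup ((fun s => max |l s| |u s|) '' I) :=
    mul_nonneg (div_nonneg zero_le_two hcl.le) (hmax l u)
  have hlevel := le_mul_of_one_le_left (hmax L₀ U₀) hq
  have hdiff := mul_nonneg (zero_le_one.trans hq) (hmean D)
  have hmean₁₂ : 2 * (cu / cl) * sSup ((fun s => sublinE Ps fun ω => |S₂ s ω|) '' I) ≤
      (2 * (cu / cl) + 2 * (cu / cl) ^ 2) *
        (sSup ((fun s => sublinE Ps fun ω => |S₁ s ω|) '' I) +
          sSup ((fun s => sublinE Ps fun ω => |S₂ s ω|) '' I)) :=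
    mul_le_mul (le_add_of_nonneg_right (by positivity)) (le_add_of_nonneg_left (hmean S₁))
      (hmean S₂) (by positivity)
  rw [aprioriConst, hcoef, mul_div_assoc]
  linarith [hmean D]

theorem stmt12_general (hPs : Ps.Nonempty) (hprob : ∀ P ∈ Ps, IsProbabilityMeasure P)
    (hloss : ∀ s ∈ Icc 0 T, IsBilipschitzLoss cl cu C (hb s))
    (hlu : ∃ M, ∀ s ∈ Icc 0 T, |l s| ≤ M ∧ |u s| ≤ M)
    (hL₀ : ∀ s ∈ Icc 0 T, Hbar Ps hb s (L₀ s) (fun _ => 0) = l s)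
    (hU₀ : ∀ s ∈ Icc 0 T, Hbar Ps hb s (U₀ s) (fun _ => 0) = u s)
    (hθ : θ ∈ Ico (0 : ℝ) 1)
    (hYbar₁ : BoundedInMean Ps (Icc 0 T) Ybar₁) (hYbar₂ : BoundedInMean Ps (Icc 0 T) Ybar₂)
    (hsol₁ : IsBSPsol Ps T hb l u Ybar₁ Y₁ R₁) (hsol₂ : IsBSPsol Ps T hb l u Ybar₂ Y₂ R₂)
    (ht : t ∈ Icc 0 T) (ω : Ω) :
    |thetaDiff θ (Y₁ t ω) (Y₂ t ω)| ≤
        aprioriConst Ps cl cu l u L₀ U₀ Ybar₁ Ybar₂ (Icc t T) +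
          |thetaDiff θ (Ybar₁ t ω) (Ybar₂ t ω)| +
          (1 + 2 * cu / cl) * sSup ((fun s => sublinE Ps fun ω' =>
            |thetaDiff θ (Ybar₁ s ω') (Ybar₂ s ω')|) '' Icc t T) ∧
      |thetaDiff θ (Y₂ t ω) (Y₁ t ω)| ≤
        aprioriConst Ps cl cu l u L₀ U₀ Ybar₁ Ybar₂ (Icc t T) +
          |thetaDiff θ (Ybar₂ t ω) (Ybar₁ t ω)| +
          (1 + 2 * cu / cl) * sSup ((fun s => sublinE Ps fun ω' =>
            |thetaDiff θ (Ybar₂ s ω') (Ybar₁ s ω')|) '' Icc t T) := by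
  have hcl := (hloss t ht).pos
  have hclu := (hloss t ht).le
  have hbound₁₂ := hsol₁.abs_thetaDiff_le hsol₂ hPs hprob hloss hlu hL₀ hU₀ hθ hYbar₁ hYbar₂ ht ω
  have hbound₂₁ := hsol₂.abs_thetaDiff_le hsol₁ hPs hprob hloss hlu hL₀ hU₀ hθ hYbar₂ hYbar₁ ht ω
  refine ⟨hbound₁₂.trans (sharp_bound_le_aprioriConst hcl hclu ..), ?_⟩
  rw [aprioriConst_comm]
  exact hbound₂₁.trans (sharp_bound_le_aprioriConst hcl hclu ..)

end BackwardSkorokhod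

/-- the `θ`-difference estimate: with `δ_θφ = (φ¹ − θφ²)/(1−θ)` and
`δ̃_θφ = (φ² − θφ¹)/(1−θ)`, for every `t ∈ [0,T]` and `ω`,
`|δ_θY_t(ω)| ≤ C₀′ + |δ_θȲ_t(ω)| + 𝒞 sup_{s∈[t,T]} Ê[|δ_θȲ_s|]` and similarly for `δ̃_θ`,
where `𝒞 = 1 + 2c̄/c̲` and `C₀′` is as in Lemma 4.2. -/
theorem stmt12 {Ω : Type*} [MeasurableSpace Ω] (T cl cu Ch : ℝ) (hT : 0 < T)
    (Ps : Set (Measure Ω)) (hPs : Ps.Nonempty) (hprob : ∀ P ∈ Ps, IsProbabilityMeasure P)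
    (l u : ℝ → ℝ) (hb : ℝ → Ω → ℝ → ℝ) (hHr : HrAssumption T cl cu Ch l u hb)
    (L U : ℝ → (Ω → ℝ) → ℝ)
    (hL : ∀ t ∈ Icc (0:ℝ) T, ∀ X : Ω → ℝ, EIntegrable Ps X → Hbar Ps hb t (L t X) X = l t)
    (hU : ∀ t ∈ Icc (0:ℝ) T, ∀ X : Ω → ℝ, EIntegrable Ps X → Hbar Ps hb t (U t X) X = u t)
    (θ : ℝ) (hθ : θ ∈ Ioo (0:ℝ) 1)
    (Ybar1 Ybar2 : ℝ → Ω → ℝ)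
    (hYbar1 : MeanContinuous Ps T Ybar1) (hYbar2 : MeanContinuous Ps T Ybar2)
    (hterm1L : l T ≤ sublinE Ps fun ω => hb T ω (Ybar1 T ω))
    (hterm1U : (sublinE Ps fun ω => hb T ω (Ybar1 T ω)) ≤ u T)
    (hterm2L : l T ≤ sublinE Ps fun ω => hb T ω (Ybar2 T ω))
    (hterm2U : (sublinE Ps fun ω => hb T ω (Ybar2 T ω)) ≤ u T)
    (Y1 Y2 : ℝ → Ω → ℝ) (R1 R2 : ℝ → ℝ)
    (hsol1 : IsBSPsol Ps T hb l u Ybar1 Y1 R1)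
    (hsol2 : IsBSPsol Ps T hb l u Ybar2 Y2 R2) :
    ∀ t ∈ Icc (0:ℝ) T, ∀ ω : Ω,
      (|(Y1 t ω - θ * Y2 t ω) / (1 - θ)| ≤
        ((2 / cl) * sSup ((fun s => max |l s| |u s|) '' Icc t T) +
          (cu / cl) * sSup ((fun s => max |L s (fun _ => 0)| |U s (fun _ => 0)|) '' Icc t T) +
          (2 * cu * (cl + cu) / cl ^ 2) *
            (sSup ((fun s => sublinE Ps fun ω' => |Ybar1 s ω'|) '' Icc t T) +
              sSup ((fun s => sublinE Ps fun ω' => |Ybar2 s ω'|) '' Icc t T))) +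
        |(Ybar1 t ω - θ * Ybar2 t ω) / (1 - θ)| +
        (1 + 2 * cu / cl) *
          sSup ((fun s => sublinE Ps fun ω' =>
            |(Ybar1 s ω' - θ * Ybar2 s ω') / (1 - θ)|) '' Icc t T)) ∧
      (|(Y2 t ω - θ * Y1 t ω) / (1 - θ)| ≤
        ((2 / cl) * sSup ((fun s => max |l s| |u s|) '' Icc t T) +
          (cu / cl) * sSup ((fun s => max |L s (fun _ => 0)| |U s (fun _ => 0)|) '' Icc t T) +
          (2 * cu * (cl + cu) / cl ^ 2) *
            (sSup ((fun s => sublinE Ps fun ω' => |Ybar1 s ω'|) '' Icc t T) +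
              sSup ((fun s => sublinE Ps fun ω' => |Ybar2 s ω'|) '' Icc t T))) +
        |(Ybar2 t ω - θ * Ybar1 t ω) / (1 - θ)| +
        (1 + 2 * cu / cl) *
          sSup ((fun s => sublinE Ps fun ω' =>
            |(Ybar2 s ω' - θ * Ybar1 s ω') / (1 - θ)|) '' Icc t T)) :=
  fun _ ht ω => stmt12_general hPs hprob (fun s _ => hHr.isBilipschitzLoss s)
    hHr.exists_abs_barrier_le (fun s hs => hL s hs _ (.const hprob 0))
    (fun s hs => hU s hs _ (.const hprob 0)) (Ioo_subset_Ico_self hθ) (hYbar1.boundedInMean hPs)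
    (hYbar2.boundedInMean hPs) hsol1 hsol2 ht ω
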